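/- Let K ≥ 1, let u be a continuously differentiable map from an open neighborhood of the closed unit disk D̄ into ℝ^K, let α > 1, and let β : ℝ → ℂ be differentiable at 0 with β(0) = 0. For t sufficiently close to 0 one has |β(t)| < 1, so φ_{β(t)} is a conformal automorphism of the unit disk. Then the function t ↦ E_α(u ∘ φ_{β(t)}) is differentiable at t = 0 and its derivative equals 4·Re( conj(β′(0)) · ∫_D ( −(1 + |∇u(z)|²)^α + α(1 + |∇u(z)|²)^{α−1}|∇u(z)|² )·z dA(z) ). -/

import Mathlib

/-- The Möbius transformation `φ_β(z) = (z − β)/(1 − conj β · z)`. -/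
noncomputable def phi (β z : ℂ) : ℂ := (z - β) / (1 - (starRingEnd ℂ) β * z)

/-- `|∇u(z)|² = |∂u/∂x(z)|² + |∂u/∂y(z)|²` for a map `u : ℂ → ℝ^K`,
identifying `ℂ` with `ℝ²` via `z = x + iy`. -/
noncomputable def gradSq {K : ℕ} (u : ℂ → EuclideanSpace ℝ (Fin K)) (z : ℂ) : ℝ :=
  ‖fderiv ℝ u z 1‖ ^ 2 + ‖fderiv ℝ u z Complex.I‖ ^ 2

/-!
Substituting `z = φ_{-b}(w)` in `∫_D f(|∇(u ∘ φ_b)|²)` moves `b` out of the gradient of `u`, which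
is merely continuous: the integral becomes `∫_D j f(|∇u|² / j)`, where the Jacobian determinant
`j = |φ_{-b}'|²` is smooth in `b`. At `b = 0` one has `j = 1`, and the gradient of `j` in `b` is
`-4w`, so differentiating under the integral sign gives the gradient of the energy in `b`; the
chain rule along `t ↦ β t` does the rest.
-/

open Complex ComplexConjugate Filter Function InnerProductSpace MeasureTheory Metric Set Topology

section GradNormSq

variable {E : Type*} [NormedAddCommGroup E]

/-- The squared gradient norm `|∇u|² = |∂u/∂x|² + |∂u/∂y|²` of a map from the plane into a normed
space; on `EuclideanSpace ℝ (Fin K)` it is `gradSq`. -/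
noncomputable def gradNormSq [NormedSpace ℝ E] (u : ℂ → E) (z : ℂ) : ℝ :=
  ‖fderiv ℝ u z 1‖ ^ 2 + ‖fderiv ℝ u z I‖ ^ 2

lemma gradNormSq_nonneg [NormedSpace ℝ E] (u : ℂ → E) (z : ℂ) : 0 ≤ gradNormSq u z := by
  unfold gradNormSq
  positivity

lemma continuousOn_gradNormSq [NormedSpace ℝ E] {u : ℂ → E} {V : Set ℂ} (hV : IsOpen V)
    (hu : ContDiffOn ℝ 1 u V) : ContinuousOn (gradNormSq u) V := by
  have hfderiv := hu.continuousOn_fderiv_of_isOpen hV le_rfl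
  exact ((hfderiv.clm_apply continuousOn_const).norm.pow 2).add
    ((hfderiv.clm_apply continuousOn_const).norm.pow 2)

lemma gradNormSq_congr [NormedSpace ℝ E] {u v : ℂ → E} {z : ℂ} (h : u =ᶠ[𝓝 z] v) :
    gradNormSq u z = gradNormSq v z := by
  rw [gradNormSq, gradNormSq, h.fderiv_eq]

variable [InnerProductSpace ℝ E]

lemma norm_sq_map_add_norm_sq_map_mul_I (L : ℂ →L[ℝ] E) (c : ℂ) :
    ‖L c‖ ^ 2 + ‖L (c * I)‖ ^ 2 = ‖c‖ ^ 2 * (‖L 1‖ ^ 2 + ‖L I‖ ^ 2) := by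
  have hc : L c = c.re • L 1 + c.im • L I := by
    rw [← map_smul, ← map_smul, ← map_add]
    simp
  have hcI : L (c * I) = c.re • L I - c.im • L 1 := by
    rw [← map_smul, ← map_smul, ← map_sub]
    congr 1
    apply Complex.ext <;> simp
  rw [hc, hcI, norm_add_sq_real, norm_sub_sq_real, Complex.sq_norm, normSq_apply]
  simp only [norm_smul, inner_smul_left, inner_smul_right, Real.norm_eq_abs, mul_pow, sq_abs,
    real_inner_comm, conj_trivial]
  ring

lemma gradNormSq_comp_of_hasDerivAt {u : ℂ → E} {ψ : ℂ → ℂ} {c z : ℂ}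
    (hu : DifferentiableAt ℝ u (ψ z)) (hψ : HasDerivAt ψ c z) :
    gradNormSq (u ∘ ψ) z = ‖c‖ ^ 2 * gradNormSq u (ψ z) := by
  have hcomp := hu.hasFDerivAt.comp z (hψ.hasFDerivAt.restrictScalars ℝ)
  rw [gradNormSq, hcomp.fderiv, gradNormSq, ← norm_sq_map_add_norm_sq_map_mul_I]
  simp [mul_comm I]

end GradNormSq

/-- The perspective `(s, j) ↦ j f(s / j)` of a function `f`: how an energy density `f(|∇u|²)`
transforms under a conformal change of variables with Jacobian determinant `j`. -/
noncomputable def perspective (f : ℝ → ℝ) (s j : ℝ) : ℝ := j * f (s / j)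

lemma hasDerivAt_perspective {f : ℝ → ℝ} {f' s j : ℝ} (hs : 0 ≤ s) (hj : 0 < j)
    (hf : HasDerivWithinAt f f' (Ici 0) (s / j)) :
    HasDerivAt (perspective f s) (f (s / j) - f' * (s / j)) j := by
  have hdiv : HasDerivAt (fun x : ℝ => s / x) (-s / j ^ 2) j := by
    simpa [div_eq_mul_inv] using (hasDerivAt_inv hj.ne').const_mul s
  have hcomp : HasDerivAt (fun x => f (s / x)) (f' * (-s / j ^ 2)) j :=
    (hf.comp j hdiv.hasDerivWithinAt fun x (hx : x ∈ Ioi 0) =>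
      div_nonneg hs (le_of_lt hx)).hasDerivAt (Ioi_mem_nhds hj)
  refine ((hasDerivAt_id j).mul hcomp).congr_deriv ?_
  simp only [id]
  field_simp
  ring

lemma continuousOn_comp_div {h : ℝ → ℝ} (hh : ContinuousOn h (Ici 0)) :
    ContinuousOn (fun p : ℝ × ℝ => h (p.1 / p.2)) (Ici 0 ×ˢ Ioi 0) :=
  hh.comp (continuousOn_fst.div continuousOn_snd fun _ hp => ne_of_gt hp.2)
    fun _ hp => mem_Ici.2 (div_nonneg hp.1 (le_of_lt hp.2))

lemma setIntegral_image_eq_setIntegral_norm_deriv_sq_smul {F : Type*} [NormedAddCommGroup F]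
    [NormedSpace ℝ F] {s : Set ℂ} (hs : MeasurableSet s) {ψ ψ' : ℂ → ℂ}
    (hψ : ∀ z ∈ s, HasDerivWithinAt ψ (ψ' z) s z) (hinj : InjOn ψ s) (h : ℂ → F) :
    ∫ z in ψ '' s, h z = ∫ z in s, ‖ψ' z‖ ^ 2 • h (ψ z) := by
  rw [integral_image_eq_integral_abs_det_fderiv_smul volume hs
    (fun z hz => (hψ z hz).hasFDerivWithinAt.restrictScalars ℝ) hinj]
  simp [ContinuousLinearMap.det, LinearMap.det_restrictScalars, Algebra.norm_complex_eq,
    normSq_eq_norm_sq]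

lemma setIntegral_image_comp_gradNormSq {E : Type*} [NormedAddCommGroup E]
    [InnerProductSpace ℝ E] {s : Set ℂ} (hs : MeasurableSet s) {ψ ψ' : ℂ → ℂ}
    (hψ : ∀ z ∈ s, HasDerivAt ψ (ψ' z) z) (hψ' : ∀ z ∈ s, ψ' z ≠ 0) (hinj : InjOn ψ s)
    {v : ℂ → E} (hv : ∀ z ∈ s, DifferentiableAt ℝ v (ψ z)) (f : ℝ → ℝ) :
    ∫ z in ψ '' s, f (gradNormSq v z) =
      ∫ z in s, perspective f (gradNormSq (v ∘ ψ) z) (‖ψ' z‖ ^ 2) := by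
  rw [setIntegral_image_eq_setIntegral_norm_deriv_sq_smul hs
    (fun z hz => (hψ z hz).hasDerivWithinAt) hinj]
  refine setIntegral_congr_fun hs fun z hz => ?_
  have hne : ‖ψ' z‖ ^ 2 ≠ 0 := pow_ne_zero 2 (norm_ne_zero_iff.2 (hψ' z hz))
  rw [perspective, gradNormSq_comp_of_hasDerivAt (hv z hz) (hψ z hz), mul_div_cancel_left₀ _ hne,
    smul_eq_mul]

lemma exists_eventually_forall_norm_le_of_isCompact {X Y G : Type*} [TopologicalSpace X]
    [TopologicalSpace Y] [SeminormedAddCommGroup G] {K : Set X} (hK : IsCompact K) {U : Set Y}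
    {y₀ : Y} (hU : U ∈ 𝓝 y₀) {F : Y → X → G} (hF : ContinuousOn (uncurry F) (U ×ˢ K)) :
    ∃ C, ∀ᶠ y in 𝓝 y₀, ∀ x ∈ K, ‖F y x‖ ≤ C := by
  obtain ⟨C, hC⟩ := hK.exists_bound_of_continuousOn (hF.uncurry_left y₀ (mem_of_mem_nhds hU))
  refine ⟨C + 1, ?_⟩
  have hlocal : ∀ x ∈ K, ∀ᶠ p : Y × X in 𝓝 (y₀, x), p.2 ∈ K → ‖F p.1 p.2‖ ≤ C + 1 := by
    intro x hx
    have hlt := (hF (y₀, x) ⟨mem_of_mem_nhds hU, hx⟩).norm.eventually_lt_const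
      ((hC x hx).trans_lt (lt_add_one C))
    filter_upwards [eventually_nhdsWithin_iff.1 hlt, prod_mem_nhds hU univ_mem]
      with p hp hpU hpK
    exact (hp ⟨hpU.1, hpK⟩).le
  filter_upwards [hK.eventually_forall_of_forall_eventually
    (P := fun y x => x ∈ K → ‖F y x‖ ≤ C + 1) hlocal] with y hy x hx
  exact hy x hx hx

lemma hasFDerivAt_setIntegral_of_subset_isCompact {𝕜 H E X : Type*} [RCLike 𝕜]
    [NormedAddCommGroup H] [NormedSpace 𝕜 H] [NormedAddCommGroup E] [NormedSpace ℝ E]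
    [NormedSpace 𝕜 E] [TopologicalSpace X] [T2Space X] [MeasurableSpace X] [OpensMeasurableSpace X]
    {μ : Measure X} [IsFiniteMeasureOnCompacts μ] {s K : Set X} (hs : MeasurableSet s)
    (hK : IsCompact K) (hsK : s ⊆ K) {U : Set H} {y₀ : H} (hU : U ∈ 𝓝 y₀) {F : H → X → E}
    {F' : H → X → H →L[𝕜] E} (hF : ∀ y ∈ U, ContinuousOn (F y) K)
    (hF' : ContinuousOn (uncurry F') (U ×ˢ K))
    (hdiff : ∀ y ∈ U, ∀ x ∈ K, HasFDerivAt (F · x) (F' y x) y) :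
    HasFDerivAt (fun y => ∫ x in s, F y x ∂μ) (∫ x in s, F' y₀ x ∂μ) y₀ := by
  have hF_int : ∀ y ∈ U, IntegrableOn (F y) s μ := fun y hy =>
    ((hF y hy).integrableOn_compact hK).mono_set hsK
  have hF'_int : IntegrableOn (F' y₀) s μ :=
    ((hF'.uncurry_left y₀ (mem_of_mem_nhds hU)).integrableOn_compact hK).mono_set hsK
  obtain ⟨C, hC⟩ := exists_eventually_forall_norm_le_of_isCompact hK hU hF'
  have hC_int : IntegrableOn (fun _ => C) s μ :=
    (continuousOn_const.integrableOn_compact hK).mono_set hsK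
  refine hasFDerivAt_integral_of_dominated_of_fderiv_le (inter_mem hU hC) ?_
    (hF_int y₀ (mem_of_mem_nhds hU)) hF'_int.aestronglyMeasurable ?_ hC_int ?_
  · filter_upwards [hU] with y hy using (hF_int y hy).aestronglyMeasurable
  · filter_upwards [ae_restrict_mem hs] with x hx y hy using hy.2 x (hsK hx)
  · filter_upwards [ae_restrict_mem hs] with x hx y hy using hdiff y hy.1 x (hsK hx)

section DiskAutomorphism

variable {b z : ℂ}

lemma one_sub_conj_mul_ne_zero (hb : ‖b‖ < 1) (hz : ‖z‖ ≤ 1) : 1 - conj b * z ≠ 0 := by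
  refine sub_ne_zero.2 fun h => ?_
  have hnorm : ‖b‖ * ‖z‖ = 1 := by simpa using congrArg norm h.symm
  nlinarith [norm_nonneg b]

lemma norm_one_sub_conj_mul_sq_sub_norm_sub_sq (b z : ℂ) :
    ‖1 - conj b * z‖ ^ 2 - ‖z - b‖ ^ 2 = (1 - ‖b‖ ^ 2) * (1 - ‖z‖ ^ 2) := by
  simp only [Complex.sq_norm, normSq_apply, sub_re, sub_im, mul_re, mul_im, conj_re, conj_im,
    one_re, one_im]
  ring

lemma mapsTo_phi_ball (hb : ‖b‖ < 1) : MapsTo (phi b) (ball 0 1) (ball 0 1) := by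
  intro z hz
  rw [mem_ball_zero_iff] at hz ⊢
  have hden : 0 < ‖1 - conj b * z‖ := norm_pos_iff.2 (one_sub_conj_mul_ne_zero hb hz.le)
  rw [phi, norm_div, div_lt_one hden]
  refine lt_of_pow_lt_pow_left₀ 2 hden.le (sub_pos.1 ?_)
  rw [norm_one_sub_conj_mul_sq_sub_norm_sub_sq]
  exact mul_pos (by nlinarith [norm_nonneg b]) (by nlinarith [norm_nonneg z])

lemma leftInvOn_phi_neg (hb : ‖b‖ < 1) : LeftInvOn (phi (-b)) (phi b) (ball 0 1) := by
  intro z hz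
  have hden := one_sub_conj_mul_ne_zero hb (mem_ball_zero_iff.1 hz).le
  have hden' := one_sub_conj_mul_ne_zero (b := -b) (by rwa [norm_neg])
    (mem_ball_zero_iff.1 (mapsTo_phi_ball hb hz)).le
  have hphi : phi b z * (1 - conj b * z) = z - b := div_mul_cancel₀ _ hden
  rw [phi, div_eq_iff hden', map_neg]
  linear_combination hphi

lemma bijOn_phi_ball (hb : ‖b‖ < 1) : BijOn (phi b) (ball 0 1) (ball 0 1) := by
  have hb' : ‖-b‖ < 1 := by rwa [norm_neg]
  have hright := leftInvOn_phi_neg hb'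
  rw [neg_neg] at hright
  exact InvOn.bijOn ⟨leftInvOn_phi_neg hb, hright⟩ (mapsTo_phi_ball hb) (mapsTo_phi_ball hb')

/-- The complex derivative of the disk automorphism `phi b`. -/
noncomputable def phiDeriv (b z : ℂ) : ℂ := (1 - conj b * b) / (1 - conj b * z) ^ 2

lemma hasDerivAt_phi (h : 1 - conj b * z ≠ 0) : HasDerivAt (phi b) (phiDeriv b z) z := by
  have hnum : HasDerivAt (fun w => w - b) 1 z := (hasDerivAt_id z).sub_const b
  have hden : HasDerivAt (fun w => 1 - conj b * w) (-(conj b * 1)) z :=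
    ((hasDerivAt_id z).const_mul _).const_sub 1
  refine (hnum.div hden h).congr_deriv ?_
  rw [phiDeriv]
  ring

lemma phiDeriv_ne_zero (hb : ‖b‖ < 1) (h : 1 - conj b * z ≠ 0) : phiDeriv b z ≠ 0 :=
  div_ne_zero (one_sub_conj_mul_ne_zero hb hb.le) (pow_ne_zero 2 h)

end DiskAutomorphism

/-- The Jacobian determinant of `phi (-b)`, the inverse of the disk automorphism `phi b`. -/
noncomputable def phiInvJac (b w : ℂ) : ℝ := ‖phiDeriv (-b) w‖ ^ 2

lemma one_sub_conj_neg_mul_ne_zero {b w : ℂ} (hb : b ∈ ball (0 : ℂ) 1)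
    (hw : w ∈ closedBall (0 : ℂ) 1) : 1 - conj (-b) * w ≠ 0 :=
  one_sub_conj_mul_ne_zero (by simpa using hb) (mem_closedBall_zero_iff.1 hw)

lemma phiInvJac_pos {b w : ℂ} (hb : b ∈ ball (0 : ℂ) 1) (hw : w ∈ closedBall (0 : ℂ) 1) :
    0 < phiInvJac b w :=
  pow_pos (norm_pos_iff.2 <| phiDeriv_ne_zero (by simpa using hb)
    (one_sub_conj_neg_mul_ne_zero hb hw)) 2

@[simp]
lemma phiInvJac_zero (w : ℂ) : phiInvJac 0 w = 1 := by simp [phiInvJac, phiDeriv]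

lemma contDiffAt_phiInvJac {n : WithTop ℕ∞} {b w : ℂ} (h : 1 - conj (-b) * w ≠ 0) :
    ContDiffAt ℝ n (uncurry phiInvJac) (b, w) := by
  have hconj : ContDiffAt ℝ n (fun p : ℂ × ℂ => conj (-p.1)) (b, w) :=
    conjCLE.contDiff.contDiffAt.comp _ contDiffAt_fst.neg
  have hnum : ContDiffAt ℝ n (fun p : ℂ × ℂ => 1 - conj (-p.1) * -p.1) (b, w) :=
    contDiffAt_const.sub (hconj.mul contDiffAt_fst.neg)
  have hden : ContDiffAt ℝ n (fun p : ℂ × ℂ => 1 - conj (-p.1) * p.2) (b, w) :=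
    contDiffAt_const.sub (hconj.mul contDiffAt_snd)
  exact (hnum.mul ((hden.pow 2).inv (pow_ne_zero 2 h))).norm_sq ℝ

lemma differentiableAt_phiInvJac_left {b w : ℂ} (h : 1 - conj (-b) * w ≠ 0) :
    DifferentiableAt ℝ (phiInvJac · w) b :=
  ((contDiffAt_phiInvJac (n := 1) h).differentiableAt one_ne_zero).comp (f := (·, w)) b
    (differentiableAt_id.prodMk (differentiableAt_const w))

lemma continuousOn_phiInvJac :
    ContinuousOn (uncurry phiInvJac) (ball 0 1 ×ˢ closedBall 0 1) := fun _ hp =>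
  (contDiffAt_phiInvJac (n := 0)
    (one_sub_conj_neg_mul_ne_zero hp.1 hp.2)).continuousAt.continuousWithinAt

lemma continuousOn_fderiv_phiInvJac :
    ContinuousOn (fun p : ℂ × ℂ => fderiv ℝ (phiInvJac · p.2) p.1)
      (ball 0 1 ×ˢ closedBall 0 1) := by
  rintro ⟨b, w⟩ ⟨hb, hw⟩
  have hsmooth : ContDiffAt ℝ 1 (uncurry fun (p : ℂ × ℂ) (c : ℂ) => phiInvJac c p.2) ((b, w), b) :=
    (contDiffAt_phiInvJac (one_sub_conj_neg_mul_ne_zero hb hw)).comp ((b, w), b)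
      (contDiffAt_snd.prodMk (contDiffAt_snd.comp _ contDiffAt_fst))
  exact (hsmooth.fderiv (m := 0) contDiffAt_fst (by norm_num)).continuousAt.continuousWithinAt

lemma hasLineDerivAt_phiInvJac_zero (v w : ℂ) :
    HasLineDerivAt ℝ (phiInvJac · w) ⟪-4 * w, v⟫_ℝ 0 v := by
  have hlin (a : ℂ) : HasDerivAt (fun t : ℝ => t * a) a 0 := by
    simpa using (hasDerivAt_id (0 : ℝ)).ofReal_comp.mul_const a
  have hnum : HasDerivAt (fun t : ℝ => 1 - t * conj v * (t * v)) 0 0 := by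
    simpa using ((hlin (conj v)).fun_mul (hlin v)).const_sub 1
  have hden : HasDerivAt (fun t : ℝ => (1 + t * (conj v * w)) ^ 2) (2 * (conj v * w)) 0 := by
    simpa using ((hlin (conj v * w)).const_add 1).fun_pow 2
  have hquot : HasDerivAt (fun t : ℝ =>
      ‖(1 - t * conj v * (t * v)) / (1 + t * (conj v * w)) ^ 2‖ ^ 2)
      (2 * -(2 * (conj v * w)).re) 0 := by
    simpa [inner] using (hnum.fun_div hden (by simp)).norm_sq
  refine (hquot.congr_deriv ?_).congr_of_eventuallyEq (.of_forall fun t => ?_)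
  · simp [inner]
    ring
  · simp [phiInvJac, phiDeriv, mul_assoc]

lemma hasGradientAt_phiInvJac_zero (w : ℂ) : HasGradientAt (phiInvJac · w) (-4 * w) 0 := by
  have hdiff : DifferentiableAt ℝ (phiInvJac · w) 0 := differentiableAt_phiInvJac_left (by simp)
  refine hasGradientAt_iff_hasFDerivAt.2 (hdiff.hasFDerivAt.congr_fderiv ?_)
  refine ContinuousLinearMap.ext fun v => ?_
  exact (hdiff.hasFDerivAt.hasLineDerivAt v).unique (hasLineDerivAt_phiInvJac_zero v w)

section InnerVariation

variable {E : Type*} [NormedAddCommGroup E] [InnerProductSpace ℝ E]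

lemma setIntegral_ball_comp_gradNormSq_comp_phi {u : ℂ → E}
    (hu : ∀ z ∈ ball (0 : ℂ) 1, DifferentiableAt ℝ u z) {b : ℂ} (hb : ‖b‖ < 1) (f : ℝ → ℝ) :
    ∫ z in ball (0 : ℂ) 1, f (gradNormSq (u ∘ phi b) z) =
      ∫ w in ball (0 : ℂ) 1, perspective f (gradNormSq u w) (phiInvJac b w) := by
  have hb' : ‖-b‖ < 1 := by rwa [norm_neg]
  have hne {c z : ℂ} (hc : ‖c‖ < 1) (hz : z ∈ ball (0 : ℂ) 1) : 1 - conj c * z ≠ 0 :=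
    one_sub_conj_mul_ne_zero hc (mem_ball_zero_iff.1 hz).le
  have hdiff : ∀ z ∈ ball (0 : ℂ) 1, DifferentiableAt ℝ (u ∘ phi b) z := fun z hz =>
    (hu _ (mapsTo_phi_ball hb hz)).comp z
      ((hasDerivAt_phi (hne hb hz)).differentiableAt.restrictScalars ℝ)
  have hcancel : ∀ w ∈ ball (0 : ℂ) 1, (u ∘ phi b) ∘ phi (-b) =ᶠ[𝓝 w] u := fun w hw => by
    filter_upwards [isOpen_ball.mem_nhds hw] with x hx
    simpa using congrArg u (leftInvOn_phi_neg hb' hx)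
  conv_lhs => rw [← (bijOn_phi_ball hb').image_eq]
  rw [setIntegral_image_comp_gradNormSq measurableSet_ball
    (fun w hw => hasDerivAt_phi (hne hb' hw)) (fun w hw => phiDeriv_ne_zero hb' (hne hb' hw))
    (bijOn_phi_ball hb').injOn fun w hw => hdiff _ (mapsTo_phi_ball hb' hw)]
  refine setIntegral_congr_fun measurableSet_ball fun w hw => ?_
  simp only [gradNormSq_congr (hcancel w hw), phiInvJac]

variable {f f' : ℝ → ℝ} (hf : ∀ s ∈ Ici (0 : ℝ), HasDerivWithinAt f (f' s) (Ici 0) s)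
  (hf' : ContinuousOn f' (Ici 0))
include hf

lemma hasFDerivAt_perspective_phiInvJac {s : ℝ} (hs : 0 ≤ s) {b w : ℂ}
    (hb : b ∈ ball (0 : ℂ) 1) (hw : w ∈ closedBall (0 : ℂ) 1) :
    HasFDerivAt (fun c => perspective f s (phiInvJac c w))
      ((f (s / phiInvJac b w) - f' (s / phiInvJac b w) * (s / phiInvJac b w)) •
        fderiv ℝ (phiInvJac · w) b) b :=
  have hJ := phiInvJac_pos hb hw
  HasDerivAt.comp_hasFDerivAt (h₂ := perspective f s) b
    (hasDerivAt_perspective hs hJ (hf _ (div_nonneg hs hJ.le)))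
    (differentiableAt_phiInvJac_left (one_sub_conj_neg_mul_ne_zero hb hw)).hasFDerivAt

include hf'

lemma hasFDerivAt_setIntegral_perspective_phiInvJac {g : ℂ → ℝ}
    (hg : ContinuousOn g (closedBall 0 1)) (hg0 : ∀ w ∈ closedBall 0 1, 0 ≤ g w) :
    HasFDerivAt (fun b => ∫ w in ball (0 : ℂ) 1, perspective f (g w) (phiInvJac b w))
      (∫ w in ball (0 : ℂ) 1, (f (g w) - f' (g w) * g w) • toDual ℝ ℂ (-4 * w)) 0 := by
  have hf_cont : ContinuousOn f (Ici 0) := fun s hs => (hf s hs).continuousWithinAt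
  have hpair : ContinuousOn (fun p : ℂ × ℂ => (g p.2, phiInvJac p.1 p.2))
      (ball 0 1 ×ˢ closedBall 0 1) :=
    (hg.comp continuousOn_snd fun _ hp => hp.2).prodMk continuousOn_phiInvJac
  have hmaps : MapsTo (fun p : ℂ × ℂ => (g p.2, phiInvJac p.1 p.2))
      (ball 0 1 ×ˢ closedBall 0 1) (Ici 0 ×ˢ Ioi 0) := fun _ hp =>
    ⟨hg0 _ hp.2, phiInvJac_pos hp.1 hp.2⟩
  have hF : ContinuousOn (uncurry fun b w => perspective f (g w) (phiInvJac b w))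
      (ball 0 1 ×ˢ closedBall 0 1) :=
    continuousOn_phiInvJac.mul ((continuousOn_comp_div hf_cont).comp hpair hmaps)
  have hweight : ContinuousOn (fun s => f s - f' s * s) (Ici 0) :=
    hf_cont.sub (hf'.mul continuousOn_id)
  have hF' := ((continuousOn_comp_div hweight).comp hpair hmaps).smul continuousOn_fderiv_phiInvJac
  have hfderiv (w : ℂ) : fderiv ℝ (phiInvJac · w) 0 = toDual ℝ ℂ (-4 * w) :=
    (hasGradientAt_phiInvJac_zero w).hasFDerivAt.fderiv
  have key := hasFDerivAt_setIntegral_of_subset_isCompact (μ := volume) measurableSet_ball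
    (isCompact_closedBall (0 : ℂ) 1) ball_subset_closedBall (ball_mem_nhds (0 : ℂ) one_pos)
    (fun b hb => hF.uncurry_left b hb) hF' fun b hb w hw =>
      hasFDerivAt_perspective_phiInvJac hf (hg0 w hw) hb hw
  simpa [hfderiv] using key

lemma hasGradientAt_setIntegral_perspective_phiInvJac {g : ℂ → ℝ}
    (hg : ContinuousOn g (closedBall 0 1)) (hg0 : ∀ w ∈ closedBall 0 1, 0 ≤ g w) :
    HasGradientAt (fun b => ∫ w in ball (0 : ℂ) 1, perspective f (g w) (phiInvJac b w))
      (4 * ∫ w in ball (0 : ℂ) 1, ((-f (g w) + f' (g w) * g w : ℝ) : ℂ) * w) 0 := by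
  refine hasGradientAt_iff_hasFDerivAt.2
    ((hasFDerivAt_setIntegral_perspective_phiInvJac hf hf' hg hg0).congr_fderiv ?_)
  have hdual (w : ℂ) : (f (g w) - f' (g w) * g w) • toDual ℝ ℂ (-4 * w) =
      toDual ℝ ℂ (4 * (((-f (g w) + f' (g w) * g w : ℝ) : ℂ) * w)) := by
    rw [← conj_trivial (f (g w) - f' (g w) * g w), ← map_smulₛₗ, real_smul]
    push_cast
    ring_nf
  simp only [hdual]
  rw [← integral_const_mul]
  exact ContinuousLinearEquiv.integral_comp_comm (𝕜 := ℝ) (toDual ℝ ℂ).toContinuousLinearEquiv _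

lemma hasGradientAt_setIntegral_ball_comp_gradNormSq_comp_phi {u : ℂ → E} {V : Set ℂ}
    (hV : IsOpen V) (hDV : closedBall (0 : ℂ) 1 ⊆ V) (hu : ContDiffOn ℝ 1 u V) :
    HasGradientAt (fun b => ∫ z in ball (0 : ℂ) 1, f (gradNormSq (u ∘ phi b) z))
      (4 * ∫ z in ball (0 : ℂ) 1,
        ((-f (gradNormSq u z) + f' (gradNormSq u z) * gradNormSq u z : ℝ) : ℂ) * z) 0 := by
  have hdiff : ∀ z ∈ ball (0 : ℂ) 1, DifferentiableAt ℝ u z := fun z hz =>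
    (hu.differentiableOn one_ne_zero).differentiableAt
      (hV.mem_nhds (hDV (ball_subset_closedBall hz)))
  refine (hasGradientAt_setIntegral_perspective_phiInvJac hf hf'
    ((continuousOn_gradNormSq hV hu).mono hDV)
    fun z _ => gradNormSq_nonneg u z).congr_of_eventuallyEq ?_
  filter_upwards [ball_mem_nhds (0 : ℂ) one_pos] with b hb
  exact setIntegral_ball_comp_gradNormSq_comp_phi hdiff (mem_ball_zero_iff.1 hb) f

theorem stmt_5_general {u : ℂ → E} {V : Set ℂ} (hV : IsOpen V)
    (hDV : closedBall (0 : ℂ) 1 ⊆ V) (hu : ContDiffOn ℝ 1 u V) {β : ℝ → ℂ} {β' : ℂ}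
    (hd : HasDerivAt β β' 0) (h0 : β 0 = 0) :
    HasDerivAt (fun t => ∫ z in ball (0 : ℂ) 1, f (gradNormSq (u ∘ phi (β t)) z))
      (4 * (conj β' * ∫ z in ball (0 : ℂ) 1,
        ((-f (gradNormSq u z) + f' (gradNormSq u z) * gradNormSq u z : ℝ) : ℂ) * z).re) 0 := by
  have hgrad := hasGradientAt_setIntegral_ball_comp_gradNormSq_comp_phi hf hf' hV hDV hu
  refine (hgrad.hasFDerivAt.comp_hasDerivAt_of_eq (0 : ℝ) hd h0.symm).congr_deriv ?_
  rw [toDual_apply_apply, real_inner_comm]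
  simp [inner]
  ring

end InnerVariation

lemma hasDerivAt_one_add_rpow (α : ℝ) {s : ℝ} (hs : -1 < s) :
    HasDerivAt (fun x => (1 + x) ^ α) (α * (1 + s) ^ (α - 1)) s := by
  have hs' : 1 + s ≠ 0 := by linarith
  simpa using ((hasDerivAt_id s).const_add 1).rpow_const (p := α) (.inl hs')

lemma continuousOn_one_add_rpow (α : ℝ) : ContinuousOn (fun x : ℝ => (1 + x) ^ α) (Ici 0) :=
  fun _ hs =>
    (hasDerivAt_one_add_rpow α (neg_one_lt_zero.trans_le hs)).continuousAt.continuousWithinAt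

/-- The derivative at `t = 0` of the inner variation `t ↦ E_α(u ∘ φ_{β t})` of the
`α`-energy on the unit disk equals
`4·Re( conj(β′(0)) · ∫_D ( −(1+|∇u|²)^α + α(1+|∇u|²)^{α−1}|∇u|² )·z dA )`. -/
theorem stmt_5 (K : ℕ) (hK : 1 ≤ K) (u : ℂ → EuclideanSpace ℝ (Fin K)) (V : Set ℂ)
    (hV : IsOpen V) (hDV : Metric.closedBall (0 : ℂ) 1 ⊆ V) (hu : ContDiffOn ℝ 1 u V)
    (α : ℝ) (hα : 1 < α) (β : ℝ → ℂ) (β' : ℂ) (hd : HasDerivAt β β' 0) (h0 : β 0 = 0) :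
    HasDerivAt
      (fun t : ℝ =>
        ∫ z in Metric.ball (0 : ℂ) 1, (1 + gradSq (fun w => u (phi (β t) w)) z) ^ α)
      (4 * ((starRingEnd ℂ) β' *
        ∫ z in Metric.ball (0 : ℂ) 1,
          ((-(1 + gradSq u z) ^ α + α * (1 + gradSq u z) ^ (α - 1) * gradSq u z : ℝ) : ℂ)
            * z).re) 0 :=
  stmt_5_general
    (fun _ hs => (hasDerivAt_one_add_rpow α (neg_one_lt_zero.trans_le hs)).hasDerivWithinAt)
    (continuousOn_const.mul (continuousOn_one_add_rpow (α - 1))) hV hDV hu hd h0
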